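/- arXiv:1505.05568 — 10 statements merged into one kernel-verified Lean document; each statement's English description precedes it below -/
import Mathlib

section
/- For all natural numbers n, k with k ≤ n, the (n,k) entry of the Shapiro Catalan triangle equals the (n,k) entry of the product of the Aigner Catalan triangle with the Pascal matrix; explicitly, ((k+1)/(n+1)) * C(2n+2, n−k) = Σ_{j=k}^{n} ((j+1)/(n+1)) * C(2n−j, n) * C(j, k), where C(a,b) denotes the binomial coefficient. Equivalently, (k+1) * C(2n+2, n−k) = Σ_{j=k}^{n} (j+1) * C(2n−j, n) * C(j, k). -/
/-!
The absorption identity `(j + 1) * C(j, k) = (k + 1) * C(j + 1, k + 1)` pulls the factor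
`(k + 1) / (n + 1)` out of the sum. What remains is the Vandermonde-type convolution
`∑ j, C(j + 1, k + 1) * C(2n - j, n) = C(2n + 2, n - k)`, an instance of `sum_choose_mul_choose`:
compare coefficients in `(1 - X)⁻⁽ᵃ⁺¹⁾ * (1 - X)⁻⁽ᵇ⁺¹⁾ = (1 - X)⁻⁽ᵃ⁺ᵇ⁺²⁾` with
`a = k + 1`, `b = n` and degree `n - k`.
-/

open Finset

/-- Upper-index Vandermonde convolution, read off from the degree `d` coefficient of
`(∑ Xⁱ) ^ (a + 1) * (∑ Xⁱ) ^ (b + 1)`. -/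
theorem sum_choose_mul_choose (a b d : ℕ) :
    ∑ i ∈ range (d + 1), ((a + i).choose a : ℝ) * ((b + (d - i)).choose b : ℝ) =
      ((a + b + 1 + d).choose d : ℝ) := by
  have h : (PowerSeries.mk 1 : PowerSeries ℝ) ^ (a + 1) * PowerSeries.mk 1 ^ (b + 1) =
      PowerSeries.mk 1 ^ (a + b + 1 + 1) := by
    rw [← pow_add]
    congr 1
    ring
  have h' := congrArg (PowerSeries.coeff d) h
  simp only [PowerSeries.mk_one_pow_eq_mk_choose_add, PowerSeries.coeff_mul,
    PowerSeries.coeff_mk] at h'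
  rw [Finset.Nat.sum_antidiagonal_eq_sum_range_succ_mk] at h'
  rw [h', Nat.choose_symm_add]

/-- The Shapiro Catalan triangle equals the product of the Aigner Catalan
triangle with the Pascal matrix. -/
theorem shapiro_eq_aigner_mul_pascal (n k : ℕ) (hkn : k ≤ n) :
    ((k + 1 : ℝ) / (n + 1)) * (Nat.choose (2 * n + 2) (n - k)) =
      ∑ j ∈ Finset.Icc k n,
        ((j + 1 : ℝ) / (n + 1)) * (Nat.choose (2 * n - j) n) * (Nat.choose j k) := by
  obtain ⟨d, rfl⟩ := Nat.exists_eq_add_of_le hkn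
  have h := sum_choose_mul_choose (k + 1) (k + d) d
  rw [show k + 1 + (k + d) + 1 + d = 2 * (k + d) + 2 by ring] at h
  rw [Nat.add_sub_cancel_left, ← h, Finset.mul_sum, ← Finset.Ico_add_one_right_eq_Icc,
    Finset.sum_Ico_eq_sum_range, show k + d + 1 - k = d + 1 by omega]
  refine Finset.sum_congr rfl fun i hi => ?_
  have hi' : i < d + 1 := Finset.mem_range.mp hi
  rw [show 2 * (k + d) - (k + i) = k + d + (d - i) by omega,
    show k + 1 + i = k + i + 1 by ring]
  have habs : ((k + i : ℕ) + 1 : ℝ) * ((k + i).choose k : ℝ) =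
      ((k + i + 1).choose (k + 1) : ℝ) * (k + 1) := by
    exact_mod_cast Nat.add_one_mul_choose_eq (k + i) k
  linear_combination
    (-((k + d + (d - i)).choose (k + d) : ℝ) / ((k + d : ℕ) + 1)) * habs
end

section
/- For every natural number n, the n-th row sum of the Aigner Catalan triangle equals the (n+1)-st Catalan number: Σ_{k=0}^{n} ((k+1)/(n+1)) * C(2n−k, n) = Catalan(n+1), where Catalan(m) = (1/(m+1)) * C(2m, m). Equivalently, Σ_{k=0}^{n} (k+1) * C(2n−k, n) = (n+1) * Catalan(n+1). -/
/-! Clearing the factor `1 / (n + 1)`, the row sum is the convolution of `k + 1` with the column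
`i ↦ (n + i).choose n`. Convolving with `k + 1` is taking partial sums twice, so two applications
of the hockey-stick identity give `(2 * n + 2).choose (n + 2)`. The ratio of this to the central
binomial coefficient `(n + 2) * catalan (n + 1) = (2 * n + 2).choose (n + 1)` is
`(n + 1) / (n + 2)`, so it equals `(n + 1) * catalan (n + 1)`. -/

open Finset

lemma sum_choose_sub (n m : ℕ) :
    ∑ k ∈ range (m + 1), (n + m - k).choose n = (n + m + 1).choose (n + 1) := by
  induction m with
  | zero => simp
  | succ m ih =>
    have h (k : ℕ) : n + (m + 1) - (k + 1) = n + m - k := by omega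
    rw [sum_range_succ']
    simp only [h, ih, Nat.sub_zero]
    rw [Nat.choose_succ_succ' (n + (m + 1)) n, add_comm, add_assoc n m 1]

/-- The hockey-stick identity summed twice. -/
lemma sum_succ_mul_choose_sub (n m : ℕ) :
    ∑ k ∈ range (m + 1), (k + 1) * (n + m - k).choose n = (n + m + 2).choose (n + 2) := by
  induction m with
  | zero => simp
  | succ m ih =>
    have h (k : ℕ) : n + (m + 1) - (k + 1) = n + m - k := by omega
    rw [sum_range_succ']
    simp only [h, add_mul (_ + 1) 1, sum_add_distrib, ih, one_mul, sum_choose_sub, zero_add,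
      Nat.sub_zero]
    rw [show n + (m + 1) + 2 = (n + m + 2) + 1 by ring, Nat.choose_succ_succ' (n + m + 2) (n + 1),
      Nat.choose_succ_succ' (n + m + 1) n, add_assoc n m 1]
    ring

lemma choose_eq_succ_mul_catalan_succ (n : ℕ) :
    (2 * n + 2).choose (n + 2) = (n + 1) * catalan (n + 1) := by
  have h₁ := Nat.choose_succ_right_eq (2 * n + 2) (n + 1)
  have h₂ := succ_mul_catalan_eq_centralBinom (n + 1)
  rw [Nat.centralBinom_eq_two_mul_choose, show 2 * (n + 1) = 2 * n + 2 by ring] at h₂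
  rw [← h₂, show 2 * n + 2 - (n + 1) = n + 1 by omega] at h₁
  apply Nat.eq_of_mul_eq_mul_right (show 0 < n + 2 by omega)
  linarith

/-- The n-th row sum of the Aigner Catalan triangle equals the (n+1)-st
Catalan number. -/
theorem aigner_row_sum_eq_catalan (n : ℕ) :
    ∑ k ∈ Finset.range (n + 1), ((k + 1 : ℝ) / (n + 1)) * (Nat.choose (2 * n - k) n) =
      (catalan (n + 1) : ℝ) := by
  have h := sum_succ_mul_choose_sub n n
  rw [← two_mul, choose_eq_succ_mul_catalan_succ] at h
  have h' : ∑ k ∈ range (n + 1), (k + 1 : ℝ) * (Nat.choose (2 * n - k) n) =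
      (n + 1) * catalan (n + 1) := by exact_mod_cast h
  simp only [div_mul_eq_mul_div]
  rw [← sum_div, h']
  field_simp
end

section
/- For all natural numbers n, k: Σ_{j=k}^{n} ((j+1)/(n+1)) * C(2n−j, n) * (−1)^{j−k} * C(k+1, j−k) = 1 if n = k and 0 if k < n; i.e., the infinite lower triangular matrix with entries (−1)^{n−k} * binom(k+1, n−k) (for k ≤ n, zero otherwise) is the inverse of the Aigner Catalan triangle. -/
open Finset

/-!
Column `k` of the proposed inverse has generating function `x ^ k * (1 - x) ^ (k + 1)`, so the
`(n, k)` entry of the product is the `(k + 1)`-st alternating difference, taken at `k`, of the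
`n`-th row of the Catalan triangle. The ballot recurrence
`C_{n+1,j+1} - C_{n+1,j+2} = C_{n,j}` (`ballot_sub`) says that one difference step turns row
`n + 1` at `j + 1` into row `n` at `j`; hence the `(n + 1, k + 1)` entry of the product equals the
`(n, k)` entry. This reduces the claim to column `0`, where the entry is `C_{n,0} - C_{n,1}`,
which is `1` for `n = 0` and `0` otherwise (`ballot_zero_sub_one`).
-/

/-- The entry `C_{n,j}` of the Aigner Catalan triangle, set to `0` above the diagonal. The case
distinction is needed: for `n = 0` and `j > 0` the formula with truncated subtraction would not
vanish. -/
noncomputable def ballot (n j : ℕ) : ℝ :=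
  if j ≤ n then ((j + 1 : ℝ) / (n + 1)) * (Nat.choose (2 * n - j) n) else 0

theorem ballot_sub (n j : ℕ) :
    ballot (n + 1) (j + 1) - ballot (n + 1) (j + 2) = ballot n j := by
  rcases lt_or_ge n j with h | h
  · simp [ballot, show ¬ j ≤ n by omega, show ¬ j + 2 ≤ n + 1 by omega]
  obtain ⟨d, rfl⟩ := Nat.exists_eq_add_of_le h
  -- On the superdiagonal (`d = 0`) the closed formula already vanishes.
  have h2 : ballot (j + d + 1) (j + 2) =
      ((j + 3 : ℝ) / (j + d + 2)) * (Nat.choose (j + d + d) (j + d + 1)) := by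
    rcases Nat.eq_zero_or_pos d with rfl | hd
    · simp [ballot]
    · rw [ballot, if_pos (by omega),
        show 2 * (j + d + 1) - (j + 2) = j + d + d by omega]
      push_cast
      ring
  have h1 : ballot (j + d + 1) (j + 1) =
      ((j + 2 : ℝ) / (j + d + 2)) * (Nat.choose (j + d + d + 1) (j + d + 1)) := by
    rw [ballot, if_pos (by omega),
      show 2 * (j + d + 1) - (j + 1) = j + d + d + 1 by omega]
    push_cast
    ring
  have h0 : ballot (j + d) j =
      ((j + 1 : ℝ) / (j + d + 1)) * (Nat.choose (j + d + d) (j + d)) := by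
    rw [ballot, if_pos (by omega), show 2 * (j + d) - j = j + d + d by omega]
    push_cast
    ring
  have hc : (Nat.choose (j + d + d) (j + d + 1) : ℝ) * (j + d + 1) =
      Nat.choose (j + d + d) (j + d) * d := by
    have := Nat.choose_succ_right_eq (j + d + d) (j + d)
    rw [Nat.add_sub_cancel_left] at this
    exact_mod_cast this
  have hp : (j + d + 1 : ℝ) ≠ 0 := by positivity
  have hq : (j + d + 2 : ℝ) ≠ 0 := by positivity
  rw [h0, h1, h2, Nat.choose_succ_succ, Nat.cast_add]
  field_simp
  linear_combination (-1 : ℝ) * hc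

theorem ballot_zero_sub_one (n : ℕ) :
    ballot n 0 - ballot n 1 = if n = 0 then 1 else 0 := by
  rcases n with _ | m
  · simp [ballot]
  · have h : Nat.choose (2 * m + 2) (m + 1) = 2 * Nat.choose (2 * m + 1) (m + 1) := by
      rw [Nat.choose_succ_succ, ← Nat.choose_symm_half m]
      ring
    have hp : (m + 2 : ℝ) ≠ 0 := by positivity
    simp only [ballot, if_pos (show 0 ≤ m + 1 by omega), if_pos (show 1 ≤ m + 1 by omega),
      show 2 * (m + 1) - 0 = 2 * m + 2 by omega, show 2 * (m + 1) - 1 = 2 * m + 1 by omega, h,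
      if_neg (Nat.succ_ne_zero m)]
    push_cast
    ring

/-- The alternating binomial sum of order `m + 1` of `f` is the one of order `m` of the
difference `f t - f (t + 1)`. -/
theorem alternating_sum_succ (f : ℕ → ℝ) (m : ℕ) :
    ∑ t ∈ range (m + 2), (-1 : ℝ) ^ t * (Nat.choose (m + 1) t) * f t =
      ∑ t ∈ range (m + 1), (-1 : ℝ) ^ t * (Nat.choose m t) * (f t - f (t + 1)) := by
  have h : ∑ t ∈ range (m + 1), (-1 : ℝ) ^ t * (Nat.choose m t) * f t =
      ∑ t ∈ range (m + 1), (-1 : ℝ) ^ (t + 1) * (Nat.choose m (t + 1)) * f (t + 1) + f 0 := by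
    have := sum_range_succ' (fun t => (-1 : ℝ) ^ t * (Nat.choose m t) * f t) (m + 1)
    rw [sum_range_succ] at this
    simpa using this
  simp only [mul_sub, sum_sub_distrib]
  rw [h, sum_range_succ', add_sub_right_comm, ← sum_sub_distrib]
  congr 1
  · refine sum_congr rfl fun t _ => ?_
    rw [Nat.choose_succ_succ]
    push_cast
    ring
  · simp

theorem ballot_alternating_sum (n k : ℕ) (hkn : k ≤ n) :
    ∑ t ∈ range (k + 2), (-1 : ℝ) ^ t * (Nat.choose (k + 1) t) * ballot n (k + t) =
      if n = k then 1 else 0 := by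
  induction k generalizing n with
  | zero =>
    rw [← ballot_zero_sub_one]
    simp [sum_range_succ]
    ring
  | succ k ih =>
    obtain ⟨m, rfl⟩ : ∃ m, n = m + 1 := ⟨n - 1, by omega⟩
    rw [alternating_sum_succ (fun t => ballot (m + 1) (k + 1 + t)) (k + 1)]
    simp only [add_left_inj]
    rw [← ih m (by omega)]
    refine sum_congr rfl fun t _ => ?_
    rw [← ballot_sub m (k + t), show k + 1 + t = k + t + 1 by ring,
      show k + 1 + (t + 1) = k + t + 2 by ring]

/-- The matrix with entries `(-1)^(n-k) * binom(k+1, n-k)` is the inverse of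
the Aigner Catalan triangle. -/
theorem aigner_inverse (n k : ℕ) (hkn : k ≤ n) :
    ∑ j ∈ Finset.Icc k n,
        ((j + 1 : ℝ) / (n + 1)) * (Nat.choose (2 * n - j) n) *
          ((-1 : ℝ) ^ (j - k) * (Nat.choose (k + 1) (j - k))) =
      if n = k then 1 else 0 := by
  rw [← ballot_alternating_sum n k hkn]
  have h : ∑ j ∈ Finset.Icc k n,
        ((j + 1 : ℝ) / (n + 1)) * (Nat.choose (2 * n - j) n) *
          ((-1 : ℝ) ^ (j - k) * (Nat.choose (k + 1) (j - k))) =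
      ∑ j ∈ Finset.Ico k (n + 1),
        (-1 : ℝ) ^ (j - k) * (Nat.choose (k + 1) (j - k)) * ballot n j := by
    refine sum_congr (by ext; simp) fun j hj => ?_
    rw [ballot, if_pos (by simp at hj; omega)]
    ring
  rw [h, sum_Ico_eq_sum_range]
  simp only [Nat.add_sub_cancel_left]
  -- Outside either range the terms vanish, so both sums extend to a common larger range.
  trans ∑ t ∈ range (n + k + 2), (-1 : ℝ) ^ t * (Nat.choose (k + 1) t) * ballot n (k + t)
  · refine sum_subset (range_subset_range.2 (by omega)) fun t _ ht => ?_
    rw [mem_range] at ht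
    rw [ballot, if_neg (by omega), mul_zero]
  · refine (sum_subset (range_subset_range.2 (by omega)) fun t _ ht => ?_).symm
    rw [mem_range] at ht
    rw [Nat.choose_eq_zero_of_lt (by omega)]
    simp
end

section
/- For all natural numbers n, k: Σ_{j=k}^{n} ((j+1)/(n+1)) * C(2n+2, n−j) * (−1)^{j−k} * C(j+k+1, j−k) = 1 if n = k and 0 if k < n; i.e., the infinite lower triangular matrix with entries (−1)^{n−k} * binom(n+k+1, n−k) (for k ≤ n, zero otherwise) is the inverse of the Shapiro Catalan triangle. -/
/-!
Up to the common factor `1 / (n + 1)`, the summand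
`F j = (j + 1) * C(2n+2, n-j) * (-1)^(j-k) * C(j+k+1, j-k)` is Gosper-summable:
`2 (n - k) * ∑_{k ≤ j ≤ l} F j = (n - l) (l + k + 2) / (l + 1) * F l`.
The right-hand side vanishes at `l = n`, so the full sum is `0` when `k < n`. The closed form for
the partial sums is `shapiro_partial_sum`, an induction on `l` that uses only the ratios of
neighbouring binomial coefficients.
-/

open Finset

/-- The telescoped partial sums, with `l = k + i` and `n = k + i + r`, so that no subtraction of
natural numbers truncates. -/
lemma shapiro_partial_sum (k i : ℕ) : ∀ r n : ℕ, n = k + i + r →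
    2 * ((n : ℝ) - k) * ∑ t ∈ Finset.range (i + 1),
        ((k + t + 1 : ℝ) * (Nat.choose (2 * n + 2) (n - (k + t))) *
          ((-1 : ℝ) ^ t * (Nat.choose (2 * k + t + 1) t))) =
      r * (2 * k + i + 2) * (Nat.choose (2 * n + 2) r) *
        ((-1 : ℝ) ^ i * (Nat.choose (2 * k + i + 1) i)) := by
  induction i with
  | zero =>
    rintro r n rfl
    simp
    ring
  | succ i ih =>
    rintro r n hn
    have h := ih (r + 1) n (by omega)
    rw [Finset.sum_range_succ, mul_add, h]
    have e : n - (k + (i + 1)) = r := by omega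
    have hA : ((Nat.choose (2 * n + 2) (r + 1) : ℕ) : ℝ) * (r + 1) =
        (Nat.choose (2 * n + 2) r : ℕ) * (2 * k + 2 * i + r + 4) := by
      have := Nat.choose_succ_right_eq (2 * n + 2) r
      rw [show 2 * n + 2 - r = 2 * k + 2 * i + r + 4 by omega] at this
      exact_mod_cast this
    have hB : (2 * k + i + 2 : ℝ) * (Nat.choose (2 * k + i + 1) i : ℕ) =
        (Nat.choose (2 * k + (i + 1) + 1) (i + 1) : ℕ) * (i + 1) := by
      have := Nat.add_one_mul_choose_eq (2 * k + i + 1) i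
      exact_mod_cast this
    have hn' : (n : ℝ) = k + i + 1 + r := by rw [hn]; push_cast; ring
    rw [e, hn', pow_succ]
    push_cast
    generalize ((Nat.choose (2 * n + 2) (r + 1) : ℕ) : ℝ) = A at *
    generalize ((Nat.choose (2 * n + 2) r : ℕ) : ℝ) = A' at *
    generalize ((Nat.choose (2 * k + i + 1) i : ℕ) : ℝ) = B at *
    generalize ((Nat.choose (2 * k + (i + 1) + 1) (i + 1) : ℕ) : ℝ) = B' at *
    linear_combination (-1 : ℝ) ^ i * (2 * k + i + 2) * B * hA +
      (-1 : ℝ) ^ i * A' * (2 * k + 2 * i + r + 4) * hB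

/-- The matrix with entries `(-1)^(n-k) * binom(n+k+1, n-k)` is the inverse of
the Shapiro Catalan triangle. -/
theorem shapiro_inverse (n k : ℕ) (hkn : k ≤ n) :
    ∑ j ∈ Finset.Icc k n,
        ((j + 1 : ℝ) / (n + 1)) * (Nat.choose (2 * n + 2) (n - j)) *
          ((-1 : ℝ) ^ (j - k) * (Nat.choose (j + k + 1) (j - k))) =
      if n = k then 1 else 0 := by
  have hn0 : (n + 1 : ℝ) ≠ 0 := by positivity
  split_ifs with hnk
  · subst hnk
    simp [hn0]
  · have h := shapiro_partial_sum k (n - k) 0 n (by omega)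
    have hne : (2 * ((n : ℝ) - k)) ≠ 0 := by
      have : (n : ℝ) ≠ k := by exact_mod_cast hnk
      exact mul_ne_zero two_ne_zero (sub_ne_zero.mpr this)
    have h0 := (mul_eq_zero.mp (h.trans (by simp))).resolve_left hne
    rw [← Finset.Ico_add_one_right_eq_Icc, Finset.sum_Ico_eq_sum_range,
      show n + 1 - k = n - k + 1 by omega]
    calc _ = (1 / (n + 1 : ℝ)) * ∑ t ∈ Finset.range (n - k + 1),
        ((k + t + 1 : ℝ) * (Nat.choose (2 * n + 2) (n - (k + t))) *
          ((-1 : ℝ) ^ t * (Nat.choose (2 * k + t + 1) t))) := by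
          rw [Finset.mul_sum]
          refine Finset.sum_congr rfl fun t _ => ?_
          rw [show k + t - k = t by omega, show k + t + k + 1 = 2 * k + t + 1 by omega]
          push_cast
          ring
      _ = 0 := by rw [h0, mul_zero]
end

section
/- For every real number r and every natural number n: Σ_{k=0}^{n} Σ_{i=0}^{n−k} ((i+k+1)/(n+1)) * C(2n−i−k, n) * C(i+k, k) * r^i = Σ_{i=0}^{n} ((i+1)/(n+1)) * C(2n−i, n) * (r+1)^i, where C(a,b) denotes the binomial coefficient. (That is, the n-th row sum of the r-Catalan triangle equals the (n,0) entry of the (r+1)-Catalan triangle.) -/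
/-! Summing along the antidiagonals `m = i + k`, the factor `(m + 1) / (n + 1) * C(2n - m, n)`
depends on `m` alone, and the remaining sum `∑ k, C(m, k) * r ^ (m - k)` is `(r + 1) ^ m` by the
binomial theorem. -/

open Finset

/-- The n-th row sum of the r-Catalan triangle equals the (n,0) entry of the
(r+1)-Catalan triangle. -/
theorem rCatalan_row_sum (r : ℝ) (n : ℕ) :
    ∑ k ∈ Finset.range (n + 1), ∑ i ∈ Finset.range (n - k + 1),
        ((i + k + 1 : ℝ) / (n + 1)) * (Nat.choose (2 * n - i - k) n) *
          (Nat.choose (i + k) k) * r ^ i =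
      ∑ i ∈ Finset.range (n + 1),
        ((i + 1 : ℝ) / (n + 1)) * (Nat.choose (2 * n - i) n) * (r + 1) ^ i := by
  have h := Finset.sum_range_diag_flip (n + 1) (fun k i : ℕ =>
    ((i + k + 1 : ℝ) / (n + 1)) * (Nat.choose (2 * n - i - k) n) *
      (Nat.choose (i + k) k) * r ^ i)
  rw [Finset.sum_congr rfl fun k hk => by
    rw [← Nat.sub_add_comm (Nat.lt_succ_iff.mp (Finset.mem_range.mp hk))], ← h]
  refine Finset.sum_congr rfl fun m _ => ?_
  rw [add_comm r 1, add_pow, Finset.mul_sum]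
  refine Finset.sum_congr rfl fun k hk => ?_
  have hkm : k ≤ m := Nat.lt_succ_iff.mp (Finset.mem_range.mp hk)
  have hc : ((m - k : ℕ) : ℝ) + k = m := by exact_mod_cast Nat.sub_add_cancel hkm
  rw [hc, Nat.sub_sub, Nat.sub_add_cancel hkm]
  ring
end

section
/- For every natural number n: Σ_{k=0}^{n} ((k+1)/(n+1)) * C(2n−k, n) * (−1)^{n−k} * F(k+2) = 1, where F denotes the Fibonacci sequence with F(1) = F(2) = 1. Equivalently, Σ_{k=0}^{n} (k+1) * C(2n−k, n) * (−1)^{n−k} * F(k+2) = n+1. -/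
/-!
Write `T n k = (k+1)/(n+1) * C(2n-k, n)`. The triangle satisfies `T (n+1) 0 = T (n+1) 1`,
`T (n+1) (k+1) - T (n+1) (k+2) = T n k` for `k ≤ n`, and `T (n+1) (n+2) = 0`. As
`(-1)^k F(k+2)` is the difference of consecutive terms of `(-1)^k F(k+1)`, summation by parts
turns the alternating sum of row `n+1` against `F(k+2)` into that of row `n`: the sum does not
depend on `n`, and it equals `1` for `n = 0`.
-/

open Finset

/-- The entries `(k+1)/(n+1) * C(2n-k, n)` of the Aigner Catalan triangle; meaningful for
`k ≤ 2 * n`, beyond which the natural subtraction truncates. -/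
noncomputable def aignerT (n k : ℕ) : ℝ :=
  ((k + 1 : ℝ) / (n + 1)) * (Nat.choose (2 * n - k) n)

lemma aignerT_succ_zero (n : ℕ) : aignerT (n + 1) 0 = aignerT (n + 1) 1 := by
  have h : (2 * (n + 1) - 0).choose (n + 1) = 2 * (2 * (n + 1) - 1).choose (n + 1) := by
    have h1 : 2 * (n + 1) - 0 = (2 * n + 1) + 1 := by omega
    have h2 : 2 * (n + 1) - 1 = 2 * n + 1 := by omega
    rw [h1, h2, Nat.choose_succ_succ, ← Nat.choose_symm_half n]
    ring
  unfold aignerT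
  rw [h]
  push_cast
  ring

lemma aignerT_top (n : ℕ) : aignerT (n + 1) (n + 2) = 0 := by
  unfold aignerT
  rw [Nat.choose_eq_zero_of_lt (by omega)]
  simp

lemma aignerT_sub (n k : ℕ) (hk : k ≤ n) :
    aignerT (n + 1) (k + 1) - aignerT (n + 1) (k + 2) = aignerT n k := by
  obtain ⟨m, rfl⟩ := Nat.exists_eq_add_of_le hk
  have h1 : 2 * (k + m + 1) - (k + 1) = (k + m + m) + 1 := by omega
  have h2 : 2 * (k + m + 1) - (k + 2) = k + m + m := by omega
  have h3 : 2 * (k + m) - k = k + m + m := by omega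
  have h := Nat.choose_succ_right_eq (k + m + m) (k + m)
  rw [Nat.add_sub_cancel_left] at h
  have h' : ((k + m + m).choose (k + m + 1) : ℝ) * (k + m + 1)
      = (k + m + m).choose (k + m) * m := by exact_mod_cast h
  unfold aignerT
  rw [h1, h2, h3, Nat.choose_succ_succ]
  push_cast
  have p1 : (k + m + 1 : ℝ) ≠ 0 := by positivity
  have p2 : (k + m + 1 + 1 : ℝ) ≠ 0 := by positivity
  field_simp
  linear_combination -h'

/-- Summation by parts, with `(-1)^k F(k+2)` as the backward difference of `(-1)^k F(k+1)`. -/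
lemma sum_alternating_fib (t : ℕ → ℝ) (m : ℕ) :
    ∑ k ∈ range m, t k * (-1) ^ k * (Nat.fib (k + 2) : ℝ) =
      ∑ k ∈ range m, (t k - t (k + 1)) * (-1) ^ k * (Nat.fib (k + 1) : ℝ)
        - t m * (-1) ^ m * (Nat.fib m : ℝ) := by
  induction m with
  | zero => simp
  | succ m ih =>
    rw [sum_range_succ, sum_range_succ, ih, Nat.fib_add_two]
    push_cast
    ring

lemma aignerT_sum_succ (n : ℕ) :
    ∑ k ∈ range (n + 2), aignerT (n + 1) k * (-1) ^ k * (Nat.fib (k + 2) : ℝ) =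
      -∑ k ∈ range (n + 1), aignerT n k * (-1) ^ k * (Nat.fib (k + 2) : ℝ) := by
  rw [sum_alternating_fib, aignerT_top, sum_range_succ', aignerT_succ_zero]
  simp only [zero_add, sub_self, zero_mul, add_zero, sub_zero]
  rw [← sum_neg_distrib]
  refine sum_congr rfl fun k hk => ?_
  rw [aignerT_sub n k (by simpa [Nat.lt_succ_iff] using hk)]
  ring

lemma aignerT_sum (n : ℕ) :
    ∑ k ∈ range (n + 1), aignerT n k * (-1) ^ k * (Nat.fib (k + 2) : ℝ) = (-1) ^ n := by
  induction n with
  | zero => simp [aignerT]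
  | succ n ih =>
    rw [aignerT_sum_succ, ih]
    ring

/-- The Aigner Catalan triangle applied to the alternating-sign Fibonacci
column gives the constant column of ones. -/
theorem aigner_fib_identity (n : ℕ) :
    ∑ k ∈ Finset.range (n + 1),
        ((k + 1 : ℝ) / (n + 1)) * (Nat.choose (2 * n - k) n) * (-1 : ℝ) ^ (n - k) *
          (Nat.fib (k + 2)) = 1 := by
  have hsq : ∀ j : ℕ, (-1 : ℝ) ^ j * (-1) ^ j = 1 := fun j => by
    rw [← mul_pow]; norm_num
  have h := congrArg ((-1 : ℝ) ^ n * ·) (aignerT_sum n)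
  simp only [hsq, mul_sum] at h
  refine Eq.trans ?_ h
  refine sum_congr rfl fun k hk => ?_
  have hkn : k ≤ n := by simpa [Nat.lt_succ_iff] using hk
  have hs : (-1 : ℝ) ^ (n - k) = (-1) ^ n * (-1) ^ k := by
    conv_rhs => rw [← Nat.sub_add_cancel hkn, pow_add, mul_assoc, hsq, mul_one]
  rw [hs, aignerT]
  ring
end

section
/- Let x be a real number and define polynomials p_k(x) = Σ_{j=0}^{k} (−1)^{k−j} * C(k+j+1, k−j) * x^j. Then for every natural number n: Σ_{k=0}^{n} ((k+1)/(n+1)) * C(2n+2, n−k) * p_k(x) = x^n. (This says that the Shapiro Catalan triangle applied to the column (p_k(x))_{k≥0} produces the column (x^n)_{n≥0}.) -/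
/-!
The polynomials `p_k` satisfy the three-term recurrence
`p_{k+2} = (x - 2) p_{k+1} - p_k` with `p_0 = 1`, `p_1 = x - 2` (`shefferPoly_succ_succ`), while the
triangle satisfies the transposed recurrence `B_{n+1,k} = B_{n,k-1} + 2 B_{n,k} + B_{n,k+1}`
(`shapiro_succ_succ`, `shapiro_succ_zero`), which is Pascal's rule applied twice once
`B_{n,k}` is written as the difference `C(2n+1, n+k+1) - C(2n+1, n+k+2)`.
Hence multiplying the sum `∑_k B_{n,k} p_k` by `x` replaces `n` by `n + 1`; the truncated version
of this summation by parts is `sum_shapiro_succ`, and its boundary terms vanish since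
`B_{n,k} = 0` for `k > n`. The claim follows by induction on `n`.
-/

open Finset

namespace ShapiroSheffer

/-- The entry `B_{n,k}` of the Shapiro triangle in ballot-number form, defined for all `k`
without truncated subtraction and equal to `0` for `k > n`. -/
def shapiro (n k : ℕ) : ℝ :=
  (Nat.choose (2 * n + 1) (n + k + 1) : ℝ) - Nat.choose (2 * n + 1) (n + k + 2)

/-- The coefficient of `x ^ j` in `p_k`, with the binomial `C(k+j+1, k-j)` reflected to
`C(k+j+1, 2j+1)`, so that it is `0` for `j > k`. -/
def shefferCoeff (k j : ℕ) : ℝ := (-1) ^ (k + j) * (Nat.choose (k + j + 1) (2 * j + 1) : ℝ)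

/-- The value `p_k(x)` of the Sheffer polynomial. -/
def shefferPoly (x : ℝ) (k : ℕ) : ℝ := ∑ j ∈ range (k + 1), shefferCoeff k j * x ^ j

/-- Pascal's rule applied twice. -/
lemma choose_add_two (N m : ℕ) : (Nat.choose (N + 2) (m + 2) : ℝ) =
    Nat.choose N m + 2 * Nat.choose N (m + 1) + Nat.choose N (m + 2) := by
  have h : Nat.choose (N + 2) (m + 2) =
      Nat.choose N m + 2 * Nat.choose N (m + 1) + Nat.choose N (m + 2) := by
    rw [Nat.choose_succ_succ' (N + 1), Nat.choose_succ_succ' N, Nat.choose_succ_succ' N]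
    ring
  exact_mod_cast h

lemma shapiro_eq (n k : ℕ) (hk : k ≤ n) :
    ((k + 1 : ℝ) / (n + 1)) * (Nat.choose (2 * n + 2) (n - k)) = shapiro n k := by
  rw [show Nat.choose (2 * n + 2) (n - k) = Nat.choose (2 * n + 2) (n + k + 2) from
    Nat.choose_symm_of_eq_add (by omega)]
  have h := Nat.add_one_mul_choose_eq (2 * n + 1) (n + k + 1)
  rw [Nat.choose_succ_succ' (2 * n + 1)] at h
  rw [Nat.choose_succ_succ' (2 * n + 1), shapiro]
  have h' := congrArg (Nat.cast (R := ℝ)) h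
  push_cast at h' ⊢
  have : (n + 1 : ℝ) ≠ 0 := by positivity
  field_simp
  linear_combination -h'

lemma shapiro_eq_zero {n k : ℕ} (h : n < k) : shapiro n k = 0 := by
  rw [shapiro, Nat.choose_eq_zero_of_lt (by omega), Nat.choose_eq_zero_of_lt (by omega)]
  simp

lemma shapiro_succ_succ (n k : ℕ) : shapiro (n + 1) (k + 1) =
    shapiro n k + 2 * shapiro n (k + 1) + shapiro n (k + 2) := by
  have h1 := choose_add_two (2 * n + 1) (n + k + 1)
  have h2 := choose_add_two (2 * n + 1) (n + k + 2)
  simp only [shapiro]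
  ring_nf at h1 h2 ⊢
  linear_combination h1 - h2

lemma shapiro_succ_zero (n : ℕ) : shapiro (n + 1) 0 = 2 * shapiro n 0 + shapiro n 1 := by
  have h1 := choose_add_two (2 * n + 1) n
  have h2 := choose_add_two (2 * n + 1) (n + 1)
  -- the missing left neighbour is accounted for by the central symmetry of the row `2n + 1`
  have h3 : (Nat.choose (2 * n + 1) n : ℝ) = Nat.choose (2 * n + 1) (n + 1) := by
    rw [Nat.choose_symm_half]
  simp only [shapiro]
  ring_nf at h1 h2 h3 ⊢
  linear_combination h1 - h2 + h3

lemma shefferCoeff_eq_zero {k j : ℕ} (h : k < j) : shefferCoeff k j = 0 := by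
  rw [shefferCoeff, Nat.choose_eq_zero_of_lt (by omega)]
  simp

lemma shefferCoeff_zero (k : ℕ) : shefferCoeff (k + 2) 0 =
    -2 * shefferCoeff (k + 1) 0 - shefferCoeff k 0 := by
  simp only [shefferCoeff, Nat.mul_zero, Nat.zero_add, Nat.choose_one_right]
  push_cast
  ring

lemma shefferCoeff_succ (k j : ℕ) : shefferCoeff (k + 2) (j + 1) =
    shefferCoeff (k + 1) j - 2 * shefferCoeff (k + 1) (j + 1) - shefferCoeff k (j + 1) := by
  have h1 := choose_add_two (k + j + 2) (2 * j + 1)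
  have h2 : (Nat.choose (k + j + 3) (2 * j + 3) : ℝ) =
      Nat.choose (k + j + 2) (2 * j + 2) + Nat.choose (k + j + 2) (2 * j + 3) := by
    exact_mod_cast Nat.choose_succ_succ' (k + j + 2) (2 * j + 2)
  simp only [shefferCoeff]
  ring_nf at h1 h2 ⊢
  linear_combination (-1) ^ k * (-1) ^ j * (2 * h2 - h1)

/-- The summation range may be enlarged, since the additional coefficients vanish. -/
lemma shefferPoly_eq_sum (x : ℝ) {k N : ℕ} (h : k + 1 ≤ N) :
    shefferPoly x k = ∑ j ∈ range N, shefferCoeff k j * x ^ j := by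
  refine sum_subset (range_subset_range.2 h) fun j _ hj => ?_
  rw [shefferCoeff_eq_zero (by simpa using hj), zero_mul]

lemma shefferPoly_succ_succ (x : ℝ) (k : ℕ) :
    shefferPoly x (k + 2) = (x - 2) * shefferPoly x (k + 1) - shefferPoly x k := by
  have h2 := shefferPoly_eq_sum x (k := k + 2) (N := k + 2 + 1) le_rfl
  have h1 := shefferPoly_eq_sum x (k := k + 1) (N := k + 2 + 1) (by omega)
  have h0 := shefferPoly_eq_sum x (k := k) (N := k + 2 + 1) (by omega)
  have hx : x * shefferPoly x (k + 1) =
      ∑ j ∈ range (k + 2), shefferCoeff (k + 1) j * x ^ (j + 1) := by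
    rw [shefferPoly, mul_sum]
    exact sum_congr rfl fun j _ => by ring
  rw [sum_range_succ'] at h0 h1 h2
  rw [sub_mul, hx, h0, h1, h2, shefferCoeff_zero]
  simp only [shefferCoeff_succ, sub_mul, sum_sub_distrib, mul_assoc, ← mul_sum]
  ring

lemma shefferPoly_zero (x : ℝ) : shefferPoly x 0 = 1 := by
  simp [shefferPoly, shefferCoeff]

lemma shefferPoly_one (x : ℝ) : shefferPoly x 1 = x - 2 := by
  simp [shefferPoly, shefferCoeff, sum_range_succ]
  ring

/-- Summation by parts: the recurrence of the triangle is transposed to that of the polynomials,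
up to the boundary terms at `M`. -/
lemma sum_shapiro_succ (x : ℝ) (n M : ℕ) :
    ∑ k ∈ range (M + 1), shapiro (n + 1) k * shefferPoly x k =
      x * ∑ k ∈ range (M + 1), shapiro n k * shefferPoly x k +
        shapiro n (M + 1) * shefferPoly x M - shapiro n M * shefferPoly x (M + 1) := by
  induction M with
  | zero =>
    simp only [zero_add, sum_range_one, shefferPoly_zero, shefferPoly_one, shapiro_succ_zero]
    ring
  | succ M ih =>
    rw [sum_range_succ, ih, sum_range_succ _ (M + 1), shapiro_succ_succ, shefferPoly_succ_succ]
    ring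

lemma sum_shapiro_mul_shefferPoly (x : ℝ) (n : ℕ) :
    ∑ k ∈ range (n + 1), shapiro n k * shefferPoly x k = x ^ n := by
  induction n with
  | zero => simp [shapiro, shefferPoly_zero]
  | succ n ih =>
    rw [sum_shapiro_succ, sum_range_succ, ih, shapiro_eq_zero (n := n) (k := n + 1) (by omega),
      shapiro_eq_zero (n := n) (k := n + 1 + 1) (by omega)]
    ring

lemma shefferPoly_eq (x : ℝ) (k : ℕ) :
    ∑ j ∈ range (k + 1), (-1 : ℝ) ^ (k - j) * (Nat.choose (k + j + 1) (k - j)) * x ^ j =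
      shefferPoly x k := by
  refine sum_congr rfl fun j hj => ?_
  obtain ⟨i, rfl⟩ := Nat.exists_eq_add_of_le (Nat.lt_succ_iff.1 (mem_range.1 hj))
  rw [shefferCoeff, Nat.choose_symm_of_eq_add
    (show j + i + j + 1 = (j + i - j) + (2 * j + 1) by omega), Nat.add_sub_cancel_left,
    show j + i + j = i + 2 * j by ring, pow_add, pow_mul]
  simp

end ShapiroSheffer

open ShapiroSheffer in
/-- The Shapiro Catalan triangle applied to the column of Sheffer polynomials
of its inverse, evaluated at `x`, produces the column `(x^n)`. -/
theorem shapiro_sheffer_inverse (x : ℝ) (n : ℕ) :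
    ∑ k ∈ Finset.range (n + 1),
        ((k + 1 : ℝ) / (n + 1)) * (Nat.choose (2 * n + 2) (n - k)) *
          (∑ j ∈ Finset.range (k + 1),
            (-1 : ℝ) ^ (k - j) * (Nat.choose (k + j + 1) (k - j)) * x ^ j) =
      x ^ n := by
  rw [← sum_shapiro_mul_shefferPoly x n]
  refine sum_congr rfl fun k hk => ?_
  rw [shefferPoly_eq, shapiro_eq n k (Nat.lt_succ_iff.1 (mem_range.1 hk))]
end

section
/- For every natural number n and every real number x: Σ_{k=0}^{n} (−1)^{n−k} * C(n+k+1, n−k) * x^k = U_n((x−2)/2), where U_n denotes the n-th Chebyshev polynomial of the second kind (evaluated over ℝ) and C(a,b) denotes the binomial coefficient. -/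
/-!
For `k ≤ n` we have `C(n+k+1, n-k) = C(n+k+1, 2k+1)` and `(-1)^(n-k) = (-1)^n (-1)^k`, so the
left-hand side is `(-1)^n Q_n(-x)` with `Q_n(y) = ∑_k C(n+k+1, 2k+1) y^k`. Applying Pascal's rule
twice to the coefficients gives `Q_{n+2} = (y+2) Q_{n+1} - Q_n` (`shapiroSum_add_two`). At `y = -x`,
after multiplication by `(-1)^n`, this is the Chebyshev recurrence at `(x-2)/2`, and the initial
values agree.
-/

/-- The sum `∑_k C(n+k+1, 2k+1) y^k`; its terms with `k > n` vanish. -/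
def shapiroSum (n : ℕ) (y : ℝ) : ℝ :=
  ∑ k ∈ Finset.range (n + 1), (Nat.choose (n + k + 1) (2 * k + 1) : ℝ) * y ^ k

/-- The range of summation may be enlarged, which lets consecutive sums share one index set. -/
lemma shapiroSum_eq_range {n N : ℕ} (h : n + 1 ≤ N) (y : ℝ) :
    shapiroSum n y = ∑ k ∈ Finset.range N, (Nat.choose (n + k + 1) (2 * k + 1) : ℝ) * y ^ k := by
  unfold shapiroSum
  refine Finset.sum_subset (Finset.range_mono h) fun k _ hk => ?_
  rw [Finset.mem_range] at hk
  rw [Nat.choose_eq_zero_of_lt (by omega)]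
  simp

lemma choose_recurrence (n k : ℕ) :
    (Nat.choose (n + 2 + (k + 1) + 1) (2 * (k + 1) + 1) : ℝ) =
      Nat.choose (n + 1 + k + 1) (2 * k + 1)
        + 2 * Nat.choose (n + 1 + (k + 1) + 1) (2 * (k + 1) + 1)
        - Nat.choose (n + (k + 1) + 1) (2 * (k + 1) + 1) := by
  rw [show n + 2 + (k + 1) + 1 = n + k + 2 + 1 + 1 by ring,
    show n + 1 + (k + 1) + 1 = n + k + 2 + 1 by ring,
    show n + 1 + k + 1 = n + k + 2 by ring, show n + (k + 1) + 1 = n + k + 2 by ring,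
    show 2 * (k + 1) + 1 = 2 * k + 1 + 1 + 1 by ring]
  simp only [Nat.choose_succ_succ' (n + k + 2 + 1), Nat.choose_succ_succ' (n + k + 2)]
  push_cast
  ring

lemma shapiroSum_add_two (n : ℕ) (y : ℝ) :
    shapiroSum (n + 2) y = (y + 2) * shapiroSum (n + 1) y - shapiroSum n y := by
  -- The product `y * shapiroSum (n + 1) y` keeps its own range and is matched with the shifted
  -- terms `k + 1` of the other sums.
  have h : y * shapiroSum (n + 1) y = ∑ k ∈ Finset.range (n + 2),
      (Nat.choose (n + 1 + k + 1) (2 * k + 1) : ℝ) * y ^ (k + 1) := by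
    rw [shapiroSum, Finset.mul_sum]
    exact Finset.sum_congr rfl fun k _ => by ring
  rw [add_mul, h, shapiroSum_eq_range (n := n + 1) (N := n + 3) (by omega),
    shapiroSum_eq_range (n := n) (N := n + 3) (by omega), shapiroSum]
  simp only [Finset.sum_range_succ' _ (n + 2), choose_recurrence, sub_mul, add_mul,
    Finset.sum_sub_distrib, Finset.sum_add_distrib, mul_assoc, ← Finset.mul_sum]
  simp
  ring

lemma shapiroSum_neg_eq_chebyshevU (x : ℝ) (n : ℕ) :
    (-1) ^ n * shapiroSum n (-x) = (Polynomial.Chebyshev.U ℝ n).eval ((x - 2) / 2) := by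
  induction n using Nat.twoStepInduction with
  | zero => simp [shapiroSum]
  | one => simp [shapiroSum, Finset.sum_range_succ]; ring
  | more n h0 h1 =>
    push_cast at h1 ⊢
    rw [Polynomial.Chebyshev.U_add_two, shapiroSum_add_two]
    simp only [Polynomial.eval_sub, Polynomial.eval_mul, Polynomial.eval_X,
      Polynomial.eval_ofNat, ← h0, ← h1]
    ring

/-- The n-th Sheffer polynomial of the inverse of the Shapiro Catalan triangle
is the Chebyshev polynomial of the second kind evaluated at `(x-2)/2`. -/
theorem shapiro_inv_sheffer_eq_chebyshevU (n : ℕ) (x : ℝ) :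
    ∑ k ∈ Finset.range (n + 1),
        (-1 : ℝ) ^ (n - k) * (Nat.choose (n + k + 1) (n - k)) * x ^ k =
      (Polynomial.Chebyshev.U ℝ n).eval ((x - 2) / 2) := by
  rw [← shapiroSum_neg_eq_chebyshevU, shapiroSum, Finset.mul_sum]
  refine Finset.sum_congr rfl fun k hk => ?_
  obtain ⟨m, rfl⟩ := Nat.exists_eq_add_of_le (Nat.lt_succ_iff.mp (Finset.mem_range.mp hk))
  rw [Nat.add_sub_cancel_left,
    Nat.choose_symm_of_eq_add (show k + m + k + 1 = m + (2 * k + 1) by ring), neg_pow x, pow_add]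
  have h : (-1 : ℝ) ^ k * (-1) ^ k = 1 := by rw [← mul_pow]; simp
  linear_combination
    (-((-1 : ℝ) ^ m * (Nat.choose (k + m + k + 1) (2 * k + 1)) * x ^ k)) * h
end

section
/- Define the 4-periodic sequence s(k) = 1 if k ≡ 0 (mod 4), s(k) = −1 if k ≡ 2 (mod 4), and s(k) = 0 if k is odd. Then for every natural number n: Σ_{k=0}^{n} ((k+1)/(n+1)) * C(2n+2, n−k) * s(k) = 2^n. Equivalently, Σ_{k=0}^{n} (k+1) * C(2n+2, n−k) * s(k) = (n+1) * 2^n. -/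
/-!
Write `T n k = (k + 1) / (n + 1) * C(2n + 2, n - k)`. This is the ballot difference
`C(2n + 1, n + 1 + k) - C(2n + 1, n + 2 + k)`, so applying Pascal's rule twice gives
`T (n + 1) k = T n (k - 1) + 2 * T n k + T n (k + 1)`, with `T n (-1) = 0`. Summing against
`s = periodicSeq4` and moving the shifts onto `s`, the relation `s (k + 1) + s (k - 1) = 0`
(also valid at `k = 0`, as `s 1 = 0`) leaves only the middle term, so each row sum is
twice the previous one.
-/

open Finset

/-- The 4-periodic sequence 1, 0, -1, 0, ... -/
def periodicSeq4 (k : ℕ) : ℝ :=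
  if k % 4 = 0 then 1 else if k % 4 = 2 then -1 else 0

/-- The Shapiro triangle as a difference of binomial coefficients. The lower indices are
written as `n + 1 + k`, not `n - k`, so that the entries vanish for `k > n`. -/
def shapiroDiff (n k : ℕ) : ℝ :=
  (Nat.choose (2 * n + 1) (n + 1 + k) : ℝ) - Nat.choose (2 * n + 1) (n + 2 + k)

lemma choose_add_two_real (m j : ℕ) :
    (Nat.choose (m + 2) (j + 2) : ℝ) =
      Nat.choose m j + 2 * Nat.choose m (j + 1) + Nat.choose m (j + 2) := by
  have h1 := Nat.choose_succ_succ' (m + 1) (j + 1)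
  have h2 := Nat.choose_succ_succ' m j
  have h3 := Nat.choose_succ_succ' m (j + 1)
  have h : Nat.choose (m + 2) (j + 2) =
      Nat.choose m j + 2 * Nat.choose m (j + 1) + Nat.choose m (j + 2) := by
    simp only [add_assoc, Nat.reduceAdd] at h1 h2 h3 ⊢
    omega
  exact_mod_cast h

lemma shapiroDiff_succ_succ (n k : ℕ) :
    shapiroDiff (n + 1) (k + 1) =
      shapiroDiff n k + 2 * shapiroDiff n (k + 1) + shapiroDiff n (k + 2) := by
  have h1 := choose_add_two_real (2 * n + 1) (n + 1 + k)
  have h2 := choose_add_two_real (2 * n + 1) (n + 2 + k)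
  unfold shapiroDiff
  ring_nf at h1 h2 ⊢
  linarith

lemma shapiroDiff_succ_zero (n : ℕ) :
    shapiroDiff (n + 1) 0 = 2 * shapiroDiff n 0 + shapiroDiff n 1 := by
  have h1 := choose_add_two_real (2 * n + 1) n
  have h2 := choose_add_two_real (2 * n + 1) (n + 1)
  -- The two middle binomial coefficients agree: the reflection that makes `T n (-1) = 0`.
  have h3 : (Nat.choose (2 * n + 1) n : ℝ) = Nat.choose (2 * n + 1) (n + 1) := by
    exact_mod_cast (Nat.choose_symm_half n).symm
  unfold shapiroDiff
  ring_nf at h1 h2 h3 ⊢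
  linarith

lemma shapiroDiff_eq_zero {n k : ℕ} (h : n < k) : shapiroDiff n k = 0 := by
  unfold shapiroDiff
  rw [Nat.choose_eq_zero_of_lt (by omega), Nat.choose_eq_zero_of_lt (by omega)]
  simp

lemma shapiroDiff_eq {n k : ℕ} (h : k ≤ n) :
    ((k + 1 : ℝ) / (n + 1)) * (Nat.choose (2 * n + 2) (n - k)) = shapiroDiff n k := by
  have hs : Nat.choose (2 * n + 2) (n - k) = Nat.choose (2 * n + 2) (n + k + 2) :=
    Nat.choose_symm_of_eq_add (by omega)
  have h1 : (Nat.choose (2 * n + 2) (n + k + 2) : ℝ) =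
      Nat.choose (2 * n + 1) (n + k + 1) + Nat.choose (2 * n + 1) (n + k + 2) := by
    exact_mod_cast Nat.choose_succ_succ' (2 * n + 1) (n + k + 1)
  have h2 : (Nat.choose (2 * n + 1) (n + k + 2) : ℝ) * (n + k + 2) =
      Nat.choose (2 * n + 1) (n + k + 1) * (n - k) := by
    have := Nat.choose_succ_right_eq (2 * n + 1) (n + k + 1)
    rw [show 2 * n + 1 - (n + k + 1) = n - k by omega] at this
    rw [← Nat.cast_sub h]
    exact_mod_cast this
  have hn : (n + 1 : ℝ) ≠ 0 := by positivity
  unfold shapiroDiff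
  rw [hs, h1, show n + 1 + k = n + k + 1 by ring, show n + 2 + k = n + k + 2 by ring]
  field_simp
  linarith

lemma periodicSeq4_add_two (k : ℕ) : periodicSeq4 (k + 2) = -periodicSeq4 k := by
  have h : k % 4 = 0 ∨ k % 4 = 1 ∨ k % 4 = 2 ∨ k % 4 = 3 := by omega
  unfold periodicSeq4
  rcases h with h | h | h | h <;> simp [Nat.add_mod, h]

/-- Summation by parts: truncated row sums double from one row to the next, up to a
boundary term that vanishes once the whole row is included. -/
lemma sum_shapiroDiff_succ (n M : ℕ) :
    ∑ k ∈ Finset.range (M + 1), shapiroDiff (n + 1) k * periodicSeq4 k =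
      2 * ∑ k ∈ Finset.range (M + 1), shapiroDiff n k * periodicSeq4 k
        + periodicSeq4 M * shapiroDiff n (M + 1) - periodicSeq4 (M + 1) * shapiroDiff n M := by
  induction M with
  | zero => simp [shapiroDiff_succ_zero, periodicSeq4]
  | succ M ih =>
    rw [Finset.sum_range_succ, ih, Finset.sum_range_succ _ (M + 1), shapiroDiff_succ_succ,
      periodicSeq4_add_two]
    ring

/-- The Shapiro Catalan triangle applied to the period-4 sequence
`1, 0, -1, 0, ...` yields the column of powers of 2. -/
theorem shapiro_periodic4_identity (n : ℕ) :
    ∑ k ∈ Finset.range (n + 1),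
        ((k + 1 : ℝ) / (n + 1)) * (Nat.choose (2 * n + 2) (n - k)) * periodicSeq4 k =
      2 ^ n := by
  have key : ∑ k ∈ Finset.range (n + 1), shapiroDiff n k * periodicSeq4 k = 2 ^ n := by
    induction n with
    | zero => simp [shapiroDiff, periodicSeq4]
    | succ n ih =>
      rw [sum_shapiroDiff_succ, Finset.sum_range_succ, ih,
        shapiroDiff_eq_zero (show n < n + 1 by omega),
        shapiroDiff_eq_zero (show n < n + 1 + 1 by omega)]
      ring
  rw [← key]
  refine Finset.sum_congr rfl fun k hk => ?_
  rw [shapiroDiff_eq (by simpa [Nat.lt_succ_iff] using hk)]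
end

section
/- Define the 6-periodic sequence t(k) = 1 if k ≡ 0 or 1 (mod 6), t(k) = −1 if k ≡ 3 or 4 (mod 6), and t(k) = 0 if k ≡ 2 or 5 (mod 6). Then for every natural number n: Σ_{k=0}^{n} ((k+1)/(n+1)) * C(2n+2, n−k) * t(k) = 3^n. Equivalently, Σ_{k=0}^{n} (k+1) * C(2n+2, n−k) * t(k) = (n+1) * 3^n. -/
/-!
The entries of the Shapiro triangle, written as differences
`B(n,k) = C(2n+1, n+1+k) - C(2n+1, n+2+k)`, satisfy
`B(n+1,k) = B(n,k-1) + 2 B(n,k) + B(n,k+1)` with `B(n,-1) = 0`, by applying Pascal's rule twice.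
The periodic sequence satisfies `t(k-1) + t(k+1) = t(k)` with `t(-1) = 0`, so it is an eigenvector
with eigenvalue `2 + 1 = 3` of the (symmetric) transition operator. Summation by parts thus shows
that `∑ B(n,k) t(k)` is multiplied by `3` when `n` increases by one; it equals `1` at `n = 0`.
-/

open Finset

/-- The 6-periodic sequence 1, 1, 0, -1, -1, 0, ... -/
def periodicSeq6 (k : ℕ) : ℝ :=
  if k % 6 = 0 ∨ k % 6 = 1 then 1 else if k % 6 = 3 ∨ k % 6 = 4 then -1 else 0

theorem periodicSeq6_rec (k : ℕ) :
    periodicSeq6 (k + 2) = periodicSeq6 (k + 1) - periodicSeq6 k := by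
  have h : k % 6 < 6 := Nat.mod_lt _ (by norm_num)
  unfold periodicSeq6
  rw [Nat.add_mod k 2, Nat.add_mod k 1]
  interval_cases k % 6 <;> norm_num

/-- The Shapiro triangle as a difference of binomial coefficients. In this form no natural-number
subtraction occurs, and the entries with `k > n` vanish. -/
def shapiroEntry (n k : ℕ) : ℝ :=
  ((2 * n + 1).choose (n + 1 + k) : ℝ) - ((2 * n + 1).choose (n + 2 + k) : ℝ)

theorem shapiroEntry_eq_zero {n k : ℕ} (h : n < k) : shapiroEntry n k = 0 := by
  unfold shapiroEntry
  rw [Nat.choose_eq_zero_of_lt (by omega), Nat.choose_eq_zero_of_lt (by omega)]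
  simp

theorem choose_add_two (N m : ℕ) :
    ((N + 2).choose (m + 2) : ℝ) = N.choose m + 2 * N.choose (m + 1) + N.choose (m + 2) := by
  rw [Nat.choose_succ_succ' (N + 1) (m + 1), Nat.choose_succ_succ' N m,
    Nat.choose_succ_succ' N (m + 1)]
  push_cast
  ring

theorem shapiroEntry_succ_succ (n k : ℕ) :
    shapiroEntry (n + 1) (k + 1) =
      shapiroEntry n k + 2 * shapiroEntry n (k + 1) + shapiroEntry n (k + 2) := by
  have h1 := choose_add_two (2 * n + 1) (n + 1 + k)
  have h2 := choose_add_two (2 * n + 1) (n + 2 + k)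
  unfold shapiroEntry
  ring_nf at h1 h2 ⊢
  linarith

/-- The recurrence at the boundary, where the symmetry `C(2n+1, n) = C(2n+1, n+1)` makes the
entry of index `-1` vanish. -/
theorem shapiroEntry_succ_zero (n : ℕ) :
    shapiroEntry (n + 1) 0 = 2 * shapiroEntry n 0 + shapiroEntry n 1 := by
  have h1 := choose_add_two (2 * n + 1) n
  have h2 := choose_add_two (2 * n + 1) (n + 1)
  have h3 : ((2 * n + 1).choose n : ℝ) = (2 * n + 1).choose (n + 1) := by
    rw [Nat.choose_symm_half]
  unfold shapiroEntry
  ring_nf at h1 h2 h3 ⊢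
  linarith

/-- Summation by parts: the truncated sums are multiplied by `3`, up to a boundary term which
vanishes once `N > n`. -/
theorem sum_shapiroEntry_succ (n N : ℕ) :
    ∑ k ∈ Finset.range (N + 1), shapiroEntry (n + 1) k * periodicSeq6 k =
      3 * ∑ k ∈ Finset.range (N + 1), shapiroEntry n k * periodicSeq6 k +
        (shapiroEntry n (N + 1) * periodicSeq6 N - shapiroEntry n N * periodicSeq6 (N + 1)) := by
  induction N with
  | zero =>
    have h0 : periodicSeq6 0 = 1 := by simp [periodicSeq6]
    have h1 : periodicSeq6 1 = 1 := by simp [periodicSeq6]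
    simp only [zero_add, Finset.sum_range_one, h0, h1, shapiroEntry_succ_zero]
    ring
  | succ N ih =>
    rw [Finset.sum_range_succ, ih, Finset.sum_range_succ _ (N + 1), shapiroEntry_succ_succ,
      periodicSeq6_rec]
    ring

theorem sum_shapiroEntry (n : ℕ) :
    ∑ k ∈ Finset.range (n + 1), shapiroEntry n k * periodicSeq6 k = 3 ^ n := by
  induction n with
  | zero => simp [shapiroEntry, periodicSeq6]
  | succ n ih =>
    rw [sum_shapiroEntry_succ, Finset.sum_range_succ, ih,
      shapiroEntry_eq_zero (show n < n + 1 by omega),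
      shapiroEntry_eq_zero (show n < n + 1 + 1 by omega)]
    ring

theorem shapiroEntry_eq {n k : ℕ} (h : k ≤ n) :
    ((k + 1 : ℝ) / (n + 1)) * (Nat.choose (2 * n + 2) (n - k)) = shapiroEntry n k := by
  have hs : (2 * n + 2).choose (n - k) = (2 * n + 2).choose (n + 2 + k) :=
    Nat.choose_symm_of_eq_add (by omega)
  have hp : ((2 * n + 2).choose (n + 2 + k) : ℝ) =
      (2 * n + 1).choose (n + 1 + k) + (2 * n + 1).choose (n + 2 + k) := by
    have := Nat.choose_succ_succ' (2 * n + 1) (n + 1 + k)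
    rw [show n + 1 + k + 1 = n + 2 + k by ring] at this
    exact_mod_cast this
  -- absorption: `(2n+2) C(2n+1, n+1+k) = (n+2+k) C(2n+2, n+2+k)`
  have ha : (2 * n + 2 : ℝ) * (2 * n + 1).choose (n + 1 + k) =
      (2 * n + 2).choose (n + 2 + k) * (n + 2 + k) := by
    have := Nat.add_one_mul_choose_eq (2 * n + 1) (n + 1 + k)
    rw [show n + 1 + k + 1 = n + 2 + k by ring] at this
    exact_mod_cast this
  have hn : (n + 1 : ℝ) ≠ 0 := by positivity
  unfold shapiroEntry
  rw [hs, div_mul_eq_mul_div, div_eq_iff hn]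
  linear_combination -ha - (n + 1 : ℝ) * hp

/-- The Shapiro Catalan triangle applied to the period-6 sequence
`1, 1, 0, -1, -1, 0, ...` yields the column of powers of 3. -/
theorem shapiro_periodic6_identity (n : ℕ) :
    ∑ k ∈ Finset.range (n + 1),
        ((k + 1 : ℝ) / (n + 1)) * (Nat.choose (2 * n + 2) (n - k)) * periodicSeq6 k =
      3 ^ n := by
  rw [← sum_shapiroEntry]
  refine Finset.sum_congr rfl fun k hk => ?_
  rw [shapiroEntry_eq (Nat.lt_succ_iff.mp (Finset.mem_range.mp hk))]
end
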